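/- Let A be a symmetric positive definite d×d matrix with eigenvalues λ₁ ≥ λ₂ ≥ … ≥ λ_d > 0 and let φ₁ be a unit eigenvector of A for λ₁. Let w be a unit vector with c := ⟨φ₁, w⟩ > 0, define μ := ((1 + c)/(2c²)) · (λ₂/λ₁)², and let w' := A w / ‖A w‖₂ be the power-iteration update. Then ⟨w', w⟩ ≥ (1 − μ(1 − c)) · c, and consequently ‖w' − w‖₂ ≤ √(2 (1 + μ c)(1 − c)). -/

import Mathlib

open Matrix Finset

/-- Euclidean norm of a vector in `ℝ^d` given by the dot product. -/
noncomputable def euclNorm {d : ℕ} (v : Fin d → ℝ) : ℝ := Real.sqrt (v ⬝ᵥ v)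

theorem parseval_aux {d : ℕ} (φ : Fin d → Fin d → ℝ)
    (hortho : ∀ i j, φ i ⬝ᵥ φ j = if i = j then (1 : ℝ) else 0) (u v : Fin d → ℝ) :
    u ⬝ᵥ v = ∑ i, (φ i ⬝ᵥ u) * (φ i ⬝ᵥ v) := by
  have h1 : (Matrix.of φ) * (Matrix.of φ)ᵀ = 1 := by
    ext i j
    rw [Matrix.mul_apply, Matrix.one_apply, ← hortho i j]
    rfl
  have h2 : (Matrix.of φ)ᵀ * (Matrix.of φ) = 1 := mul_eq_one_comm.mp h1
  have h3 : ((Matrix.of φ) *ᵥ u) ⬝ᵥ ((Matrix.of φ) *ᵥ v) = u ⬝ᵥ v := by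
    rw [Matrix.dotProduct_mulVec, Matrix.vecMul_mulVec, h2, Matrix.vecMul_one]
  rw [← h3]
  rfl

/-- bound on the movement of one power-iteration step. Let `A` be
symmetric positive definite with orthonormal eigenbasis `φ` and decreasing eigenvalues
`λ`, let `w` be a unit vector with `c = ⟨φ₁, w⟩ > 0`, and
`μ = ((1+c)/(2c²))(λ₂/λ₁)²`. Then the update `w' = A w / ‖A w‖₂` satisfies
`⟨w', w⟩ ≥ (1 − μ(1−c)) c` and `‖w' − w‖₂ ≤ √(2(1 + μ c)(1 − c))`. -/
theorem stmt7 {d : ℕ} (hd : 2 ≤ d)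
    (A : Matrix (Fin d) (Fin d) ℝ) (hA : A.IsSymm)
    (lam : Fin d → ℝ) (φ : Fin d → Fin d → ℝ)
    (hortho : ∀ i j, φ i ⬝ᵥ φ j = if i = j then (1 : ℝ) else 0)
    (heig : ∀ i, A.mulVec (φ i) = lam i • φ i)
    (hsorted : ∀ i j : Fin d, i ≤ j → lam j ≤ lam i)
    (hpos : ∀ i, 0 < lam i)
    (w : Fin d → ℝ) (hw : w ⬝ᵥ w = 1)
    (c : ℝ) (hc : c = φ ⟨0, by omega⟩ ⬝ᵥ w) (hcpos : 0 < c)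
    (μ : ℝ)
    (hμ : μ = (1 + c) / (2 * c ^ 2) * (lam ⟨1, by omega⟩ / lam ⟨0, by omega⟩) ^ 2) :
    let w' : Fin d → ℝ := (euclNorm (A.mulVec w))⁻¹ • A.mulVec w
    (1 - μ * (1 - c)) * c ≤ w' ⬝ᵥ w ∧
      euclNorm (w' - w) ≤ Real.sqrt (2 * (1 + μ * c) * (1 - c)) := by
  intro w'
  set i0 : Fin d := ⟨0, by omega⟩ with hi0
  set i1 : Fin d := ⟨1, by omega⟩ with hi1
  set a : Fin d → ℝ := fun i => φ i ⬝ᵥ w with ha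
  have hAa : ∀ i, φ i ⬝ᵥ A.mulVec w = lam i * a i := by
    intro i
    rw [Matrix.dotProduct_mulVec, ← Matrix.mulVec_transpose, hA.eq, heig, smul_dotProduct,
      smul_eq_mul]
  have hsum : ∑ i, a i * a i = 1 := by
    rw [← hw, parseval_aux φ hortho w w]
  have hs : A.mulVec w ⬝ᵥ w = ∑ i, lam i * a i * a i := by
    rw [parseval_aux φ hortho]
    simp only [hAa, ha]
  have hq : A.mulVec w ⬝ᵥ A.mulVec w = ∑ i, (lam i * a i) * (lam i * a i) := by
    rw [parseval_aux φ hortho]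
    simp only [hAa]
  have hca : a i0 = c := hc.symm
  have hc2 : c * c ≤ 1 := by
    rw [← hsum, ← hca]
    exact Finset.single_le_sum (f := fun i => a i * a i)
      (fun i _ => mul_self_nonneg _) (Finset.mem_univ i0)
  have hc1 : c ≤ 1 := by nlinarith
  have l0 := hpos i0
  have l1 := hpos i1
  have hs1 : lam i0 * c * c ≤ A.mulVec w ⬝ᵥ w := by
    rw [hs, ← hca]
    refine Finset.single_le_sum (f := fun i => lam i * a i * a i) (fun i _ => ?_)
      (Finset.mem_univ i0)
    have := mul_nonneg (hpos i).le (mul_self_nonneg (a i))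
    linarith
  have hq0 : (lam i0 * c) * (lam i0 * c) ≤ A.mulVec w ⬝ᵥ A.mulVec w := by
    rw [hq, ← hca]
    exact Finset.single_le_sum (f := fun i => (lam i * a i) * (lam i * a i))
      (fun i _ => mul_self_nonneg _) (Finset.mem_univ i0)
  have hq1 : A.mulVec w ⬝ᵥ A.mulVec w ≤ (lam i0)^2 * c^2 + (lam i1)^2 * (1 - c^2) := by
    have h : ∑ i, (lam i * a i) * (lam i * a i) ≤
        ∑ i, ((lam i1)^2 * (a i * a i)
          + if i = i0 then ((lam i0)^2 - (lam i1)^2) * c^2 else 0) := by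
      refine Finset.sum_le_sum fun i _ => ?_
      split_ifs with h
      · rw [h, hca]
        apply le_of_eq
        ring
      · have hle : i1 ≤ i := by
          rw [Fin.le_def]
          have : (i : ℕ) ≠ 0 := fun h' => h (Fin.ext h')
          simp only [hi1]
          omega
        have h2 : (lam i)^2 ≤ (lam i1)^2 := pow_le_pow_left₀ (hpos i).le (hsorted _ _ hle) 2
        have := mul_le_mul_of_nonneg_right h2 (mul_self_nonneg (a i))
        linarith
    rw [Finset.sum_add_distrib, ← Finset.mul_sum, hsum, Finset.sum_ite_eq' Finset.univ i0] at h
    simp only [Finset.mem_univ, if_true] at h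
    rw [hq]
    linarith
  have hqpos : 0 < A.mulVec w ⬝ᵥ A.mulVec w :=
    lt_of_lt_of_le (mul_self_pos.mpr (by positivity)) hq0
  set q := A.mulVec w ⬝ᵥ A.mulVec w with hqdef
  have hN : euclNorm (A.mulVec w) = Real.sqrt q := rfl
  have hNpos : 0 < Real.sqrt q := Real.sqrt_pos.mpr hqpos
  have hNsq : Real.sqrt q * Real.sqrt q = q := Real.mul_self_sqrt hqpos.le
  have hμ0 : 0 ≤ μ := by rw [hμ]; positivity
  have hy0 : 0 ≤ μ * (1 - c) := mul_nonneg hμ0 (by linarith)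
  have hkey : (lam i0)^2 * c^2 * (2 * (μ * (1 - c))) = (lam i1)^2 * (1 - c^2) := by
    rw [hμ]
    field_simp
    ring
  set y := μ * (1 - c) with hy
  have hNB : Real.sqrt q ≤ lam i0 * c * (1 + y) := by
    apply Real.sqrt_le_iff.mpr
    refine ⟨by positivity, hq1.trans ?_⟩
    rw [← hkey]
    nlinarith [sq_nonneg (lam i0 * c * y)]
  have hww : w' ⬝ᵥ w = (Real.sqrt q)⁻¹ * (A.mulVec w ⬝ᵥ w) := by
    simp only [w', hN, smul_dotProduct, smul_eq_mul]
  have hw'w' : w' ⬝ᵥ w' = 1 := by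
    simp only [w', hN, smul_dotProduct, dotProduct_smul, smul_eq_mul]
    rw [← hqdef, ← hNsq]
    field_simp
    simp [hNsq]
  have main : (1 - y) * c ≤ w' ⬝ᵥ w := by
    rw [hww, inv_mul_eq_div, le_div_iff₀ hNpos]
    refine le_trans ?_ hs1
    rcases le_total 0 (1 - y) with h | h
    · calc (1 - y) * c * Real.sqrt q ≤ (1 - y) * c * (lam i0 * c * (1 + y)) :=
            mul_le_mul_of_nonneg_left hNB (mul_nonneg h hcpos.le)
        _ = lam i0 * c * c - lam i0 * (c * y)^2 := by ring
        _ ≤ lam i0 * c * c := by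
            have := mul_nonneg l0.le (sq_nonneg (c * y))
            linarith
    · have h1 : (1 - y) * (c * Real.sqrt q) ≤ 0 :=
        mul_nonpos_of_nonpos_of_nonneg h (by positivity)
      have h2 : 0 ≤ lam i0 * c * c := by positivity
      linarith
  refine ⟨main, ?_⟩
  unfold euclNorm
  apply Real.sqrt_le_sqrt
  rw [sub_dotProduct, dotProduct_sub, dotProduct_sub, hw'w', hw, dotProduct_comm w w']
  have : 2 * (1 + μ * c) * (1 - c) = 2 - 2 * ((1 - y) * c) := by rw [hy]; ring
  linarith
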